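/- arXiv:1801.01336 — 2 statements merged into one kernel-verified Lean document; each statement's English description precedes it below -/
import Mathlib

section
/- Let Δ ≥ 4 be an even integer and let t be an integer with 1 ≤ t ≤ Δ−2. Let c be a proper edge-coloring of the multigraph H^Δ_t. If j and h are indices with h ∉ {j, j'} and P_c(v_j) = P_c(v_h), then P_c(v_{j'}) ≠ P_c(v_{h'}). (Equivalently, the palette multigraph restricted to the non-central vertices has no multiple edges.) -/
/-- A proper edge-coloring of a multigraph given by an edge-index type `E`,
a vertex type `V` and an endpoints map `ends : E → Sym2 V`: distinct edges
sharing an endpoint receive distinct colors. -/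
def MG.Proper {E V C : Type*} (ends : E → Sym2 V) (c : E → C) : Prop :=
  ∀ e₁ e₂ : E, e₁ ≠ e₂ → (∃ x : V, x ∈ ends e₁ ∧ x ∈ ends e₂) → c e₁ ≠ c e₂

/-- The palette of a vertex: the set of colors of the edges incident with it. -/
def MG.palette {E V C : Type*} (ends : E → Sym2 V) (c : E → C) (x : V) : Set C :=
  {γ : C | ∃ e : E, x ∈ ends e ∧ c e = γ}

/-- The multigraph `H^Δ_t`: vertices are `none` (the center `u`) and `some j`
(the vertex `v_j`), edges are the spokes `e_j = u v_j` together with `t`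
parallel edges between `v_{2i}` and `v_{2i+1}`. -/
def Hends (Δ t : ℕ) : (Fin Δ ⊕ Fin (Δ / 2) × Fin t) → Sym2 (Option (Fin Δ))
  | Sum.inl j => s(none, some j)
  | Sum.inr (i, _) =>
      s(some ⟨2 * i.1, by have := i.2; omega⟩, some ⟨2 * i.1 + 1, by have := i.2; omega⟩)

/-- The partner `j'` of an index `j`: `j+1` if `j` is even, `j-1` if `j` is odd. -/
def partner {Δ : ℕ} (hΔ : 2 ∣ Δ) (j : Fin Δ) : Fin Δ :=
  ⟨if j.1 % 2 = 0 then j.1 + 1 else j.1 - 1, by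
    obtain ⟨k, hk⟩ := hΔ; have := j.2; split <;> omega⟩

theorem partner_mem_aux {Δ t : ℕ} (hev : 2 ∣ Δ) (x : Fin Δ) (p : Fin (Δ / 2) × Fin t)
    (hx : some x ∈ Hends Δ t (Sum.inr p)) :
    some (partner hev x) ∈ Hends Δ t (Sum.inr p) := by
  obtain ⟨i, s⟩ := p
  simp only [Hends, Sym2.mem_iff, Option.some.injEq, partner, Fin.ext_iff] at hx ⊢
  split <;> omega

theorem partner_partner_aux {Δ : ℕ} (hev : 2 ∣ Δ) (x : Fin Δ) :
    partner hev (partner hev x) = x := by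
  simp only [partner, Fin.ext_iff]
  split <;> split <;> omega

theorem partner_ne_aux {Δ : ℕ} (hev : 2 ∣ Δ) (x : Fin Δ) : x ≠ partner hev x := by
  simp only [partner, ne_eq, Fin.ext_iff]
  split <;> omega

/-- if `h ∉ {j, j'}` and `v_j`, `v_h` have the same palette, then
`v_{j'}` and `v_{h'}` have distinct palettes (no multiple edges in the palette
multigraph restricted to the non-central vertices). -/
theorem partner_palettes_distinct {Δ t : ℕ} (hΔ : 4 ≤ Δ) (hev : 2 ∣ Δ)
    (ht1 : 1 ≤ t) (ht2 : t ≤ Δ - 2) {C : Type*}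
    (c : (Fin Δ ⊕ Fin (Δ / 2) × Fin t) → C) (hc : MG.Proper (Hends Δ t) c)
    (j h : Fin Δ) (hhj : h ≠ j) (hhj' : h ≠ partner hev j)
    (hpal : MG.palette (Hends Δ t) c (some j) = MG.palette (Hends Δ t) c (some h)) :
    MG.palette (Hends Δ t) c (some (partner hev j)) ≠
      MG.palette (Hends Δ t) c (some (partner hev h)) := by
  intro hpal'
  have spoke : ∀ x y : Fin Δ, x ≠ y → c (Sum.inl x) ≠ c (Sum.inl y) := fun x y hxy =>
    hc _ _ (fun e => hxy (Sum.inl.inj e)) ⟨none, by simp [Hends], by simp [Hends]⟩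
  have h1 : c (Sum.inl j) ∈ MG.palette (Hends Δ t) c (some j) :=
    ⟨Sum.inl j, by simp [Hends], rfl⟩
  rw [hpal] at h1
  obtain ⟨e, he, hce⟩ := h1
  rcases e with k | p
  · have hk : h = k := by simpa [Hends] using he
    subst hk
    exact spoke _ _ hhj hce
  have h2 : c (Sum.inl j) ∈ MG.palette (Hends Δ t) c (some (partner hev h)) :=
    ⟨Sum.inr p, partner_mem_aux hev h p he, hce⟩
  rw [← hpal'] at h2
  obtain ⟨e, he, hce⟩ := h2
  rcases e with k | q
  · have hk : partner hev j = k := by simpa [Hends] using he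
    subst hk
    exact spoke _ _ (partner_ne_aux hev j).symm hce
  have h3 := partner_mem_aux hev _ q he
  rw [partner_partner_aux] at h3
  exact hc (Sum.inr q) (Sum.inl j) (by simp) ⟨some j, h3, by simp [Hends]⟩ hce
end

section
/- Let Δ ≥ 4 be an even integer and let t be an integer with 1 ≤ t ≤ Δ−2. Let c be a proper edge-coloring of the multigraph H^Δ_t, and let Γ be the simple graph whose vertices are the palettes P_c(v_j) for j ∈ {0,…,Δ−1}, with two palettes P ≠ Q adjacent if and only if there exists an even index j with {P, Q} = {P_c(v_j), P_c(v_{j+1})}. Then for every palette P occurring among the non-central vertices, the degree of P in Γ equals the number of indices j ∈ {0,…,Δ−1} with P_c(v_j) = P. -/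
theorem partner_partner {Δ : ℕ} (hev : 2 ∣ Δ) (j : Fin Δ) :
    partner hev (partner hev j) = j := by
  apply Fin.ext
  simp only [partner]
  split_ifs <;> omega

theorem partner_ne {Δ : ℕ} (hev : 2 ∣ Δ) (j : Fin Δ) : partner hev j ≠ j := by
  intro h
  have := congrArg Fin.val h
  simp only [partner] at this
  split_ifs at this <;> omega

theorem mem_inr_partner {Δ t : ℕ} (hev : 2 ∣ Δ) (j : Fin Δ) (p : Fin (Δ / 2) × Fin t)
    (h : some j ∈ Hends Δ t (Sum.inr p)) : some (partner hev j) ∈ Hends Δ t (Sum.inr p) := by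
  obtain ⟨i, s⟩ := p
  simp only [Hends, Sym2.mem_iff, Option.some.injEq, Fin.ext_iff, partner] at h ⊢
  split_ifs <;> omega

theorem mem_inl {Δ t : ℕ} (j k : Fin Δ) :
    some j ∈ Hends Δ t (Sum.inl k) ↔ j = k := by
  simp [Hends]

theorem none_mem_inl {Δ t : ℕ} (k : Fin Δ) : none ∈ Hends Δ t (Sum.inl k) := by
  simp [Hends]

theorem spoke_inj {Δ t : ℕ} {C : Type*}
    (c : (Fin Δ ⊕ Fin (Δ / 2) × Fin t) → C) (hc : MG.Proper (Hends Δ t) c) (j k : Fin Δ)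
    (h : c (Sum.inl j) = c (Sum.inl k)) : j = k := by
  by_contra hne
  exact hc (Sum.inl j) (Sum.inl k) (by simpa using hne)
    ⟨none, none_mem_inl j, none_mem_inl k⟩ h

theorem spoke_mem {Δ t : ℕ} {C : Type*}
    (c : (Fin Δ ⊕ Fin (Δ / 2) × Fin t) → C) (j : Fin Δ) :
    c (Sum.inl j) ∈ MG.palette (Hends Δ t) c (some j) :=
  ⟨Sum.inl j, (mem_inl j j).2 rfl, rfl⟩

theorem spoke_not_mem {Δ t : ℕ} (hev : 2 ∣ Δ) {C : Type*}
    (c : (Fin Δ ⊕ Fin (Δ / 2) × Fin t) → C) (hc : MG.Proper (Hends Δ t) c) (j : Fin Δ) :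
    c (Sum.inl j) ∉ MG.palette (Hends Δ t) c (some (partner hev j)) := by
  rintro ⟨e | p, he, h⟩
  · rw [mem_inl] at he
    exact partner_ne hev j (he.trans (spoke_inj c hc _ _ h))
  · have := mem_inr_partner hev _ p he
    rw [partner_partner] at this
    exact hc (Sum.inr p) (Sum.inl j) (by simp) ⟨some j, this, (mem_inl j j).2 rfl⟩ h

theorem eq_spoke {Δ t : ℕ} (hev : 2 ∣ Δ) {C : Type*}
    (c : (Fin Δ ⊕ Fin (Δ / 2) × Fin t) → C) (j : Fin Δ) (x : C)
    (hx : x ∈ MG.palette (Hends Δ t) c (some j))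
    (hx' : x ∉ MG.palette (Hends Δ t) c (some (partner hev j))) : x = c (Sum.inl j) := by
  obtain ⟨e | p, he, h⟩ := hx
  · rw [mem_inl] at he
    rw [he, h]
  · exact absurd ⟨Sum.inr p, mem_inr_partner hev _ p he, h⟩ hx'

/-- in the simple graph `Γ` on the palettes of the non-central
vertices of `H^Δ_t` (two distinct palettes being adjacent iff they are the
palettes of `v_j` and `v_{j+1}` for some even `j`), the degree of each palette
`P` equals the number of indices `j` with `P_c(v_j) = P`. -/
theorem palette_graph_degree {Δ t : ℕ} (hΔ : 4 ≤ Δ) (hev : 2 ∣ Δ)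
    (ht1 : 1 ≤ t) (ht2 : t ≤ Δ - 2) {C : Type*}
    (c : (Fin Δ ⊕ Fin (Δ / 2) × Fin t) → C) (hc : MG.Proper (Hends Δ t) c)
    (P : {P : Set C // ∃ j : Fin Δ, MG.palette (Hends Δ t) c (some j) = P}) :
    ((SimpleGraph.fromRel
      (fun P Q : {P : Set C // ∃ j : Fin Δ, MG.palette (Hends Δ t) c (some j) = P} =>
        ∃ j : Fin Δ, j.1 % 2 = 0 ∧
          P.1 = MG.palette (Hends Δ t) c (some j) ∧
          Q.1 = MG.palette (Hends Δ t) c (some (partner hev j)))).neighborSet P).ncard =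
      {j : Fin Δ | MG.palette (Hends Δ t) c (some j) = P.1}.ncard := by
  symm
  refine Set.ncard_congr (fun j _ => ⟨MG.palette (Hends Δ t) c (some (partner hev j)), _, rfl⟩)
    ?_ ?_ ?_
  · intro j hj
    simp only [Set.mem_ofPred_eq] at hj
    rw [SimpleGraph.mem_neighborSet, SimpleGraph.fromRel_adj]
    refine ⟨?_, ?_⟩
    · intro h
      have h1 := congrArg Subtype.val h
      simp only at h1
      apply spoke_not_mem hev c hc j
      rw [← h1, ← hj]
      exact spoke_mem c j
    · by_cases hp : j.1 % 2 = 0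
      · exact Or.inl ⟨j, hp, hj.symm, rfl⟩
      · refine Or.inr ⟨partner hev j, ?_, rfl, ?_⟩
        · simp only [partner]
          split_ifs; omega
        · rw [partner_partner]; exact hj.symm
  · intro j k hj hk h
    simp only [Set.mem_ofPred_eq] at hj hk
    have h1 := congrArg Subtype.val h
    simp only at h1
    apply spoke_inj c hc
    apply eq_spoke hev c k
    · rw [hk, ← hj]; exact spoke_mem c j
    · rw [← h1]; exact spoke_not_mem hev c hc j
  · intro Q hQ
    rw [SimpleGraph.mem_neighborSet, SimpleGraph.fromRel_adj] at hQ
    obtain ⟨-, ⟨j, -, h1, h2⟩ | ⟨j, -, h1, h2⟩⟩ := hQ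
    · exact ⟨j, h1.symm, Subtype.ext h2.symm⟩
    · refine ⟨partner hev j, h2.symm, Subtype.ext ?_⟩
      simp only [partner_partner]
      exact h1.symm
end
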